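/- Suppose g(r) = o(r^{-c}) as r → ∞ for some c > d. For b ∈ ℝ define r_n(b) by r_n(b)^d = (log n + b)/(α n) (for n large enough that this is positive). Then E[W_n(r_n(b))] → e^{-b} as n → ∞. -/

import Mathlib

/-!
Given the number of vertices and the position of one of them, the edges from it to the other
vertices are independent, and by translation invariance of the torus each is present with the same
probability `p(r)`. Averaging over the Poisson number of vertices gives
`E[W_n(r)] = n exp(-n p(r))`. Rescaling by `r⁻¹`, `p(r) = r^d (α - τ(r))` where `τ(r)` is the
integral of `g(|·|)` outside the cube `r⁻¹ S`, so that
`E[W_n(r_n(b))] = exp(-b + (log n + b) τ(r_n(b)) / α)`. It remains to see that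
`(log n + b) τ(r_n(b)) → 0`. Now `log n + b` is of order `log r_n(b)⁻¹`, and
`r⁻¹ ≤ 2|u| ≤ (1 + |u|)²` for every `u` outside `r⁻¹ S`, so `log r⁻¹ · τ(r)` is at most twice the
integral of `g(|u|) log (1 + |u|)` outside `r⁻¹ S`: the tail of a convergent integral.
-/

open MeasureTheory ProbabilityTheory Filter Set

noncomputable section

namespace RCM

/-- The toroidal metric on the unit cube. -/
def torusDist {d : ℕ} (x y : EuclideanSpace ℝ (Fin d)) : ℝ :=
  ⨅ z : Fin d → ℤ, ‖x - y - (WithLp.equiv 2 (Fin d → ℝ)).symm (fun i => (z i : ℝ))‖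

/-- The half-open unit cube `S = (-1/2, 1/2]^d`. -/
def cube (d : ℕ) : Set (EuclideanSpace ℝ (Fin d)) :=
  {x | ∀ i, x i ∈ Set.Ioc (-(1/2) : ℝ) (1/2)}

/-- The random connection model: i.i.d. uniform points `X`, coupled Poisson counts `N`,
i.i.d. uniform edge variables `U`, with the three families mutually independent, and a
non-increasing connection function `g : [0,∞) → [0,1]` with finite positive integral `α`. -/
structure Model (d : ℕ) {Ω : Type*} [MeasurableSpace Ω] (P : Measure Ω) where
  g : ℝ → ℝ
  α : ℝ
  X : ℕ → Ω → EuclideanSpace ℝ (Fin d)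
  N : ℕ → Ω → ℕ
  U : ℕ → ℕ → Ω → ℝ
  g_antitone : AntitoneOn g (Set.Ici 0)
  g_mem : ∀ r : ℝ, 0 ≤ r → g r ∈ Set.Icc (0 : ℝ) 1
  g_integrable : MeasureTheory.Integrable (fun x : EuclideanSpace ℝ (Fin d) => g ‖x‖)
  α_def : α = ∫ x : EuclideanSpace ℝ (Fin d), g ‖x‖
  α_pos : 0 < α
  X_meas : ∀ i, Measurable (X i)
  X_unif : ∀ i : ℕ, 1 ≤ i → Measure.map (X i) P = volume.restrict (cube d)
  X_indep : iIndepFun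
    (fun i : {i : ℕ // 1 ≤ i} => X i) P
  N_meas : ∀ n, Measurable (N n)
  N_mono : ∀ ω, Monotone fun n => N n ω
  N_poisson : ∀ n k : ℕ,
    P {ω | N n ω = k} = ENNReal.ofReal (Real.exp (-(n : ℝ)) * (n : ℝ) ^ k / k.factorial)
  U_meas : ∀ i j, Measurable (U i j)
  U_unif : ∀ i j : ℕ, 1 ≤ i → i < j →
    Measure.map (U i j) P = volume.restrict (Set.Icc (0 : ℝ) 1)
  U_indep : iIndepFun
    (fun p : {p : ℕ × ℕ // 1 ≤ p.1 ∧ p.1 < p.2} => U p.1.1 p.1.2) P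
  families_indep : iIndep
    (![MeasurableSpace.comap (fun ω => fun i : ℕ => X i ω) inferInstance,
       MeasurableSpace.comap (fun ω => fun n : ℕ => N n ω) inferInstance,
       MeasurableSpace.comap (fun ω => fun p : ℕ × ℕ => U p.1 p.2 ω) inferInstance]) P

variable {d : ℕ} {Ω : Type*} [MeasurableSpace Ω] {P : Measure Ω}

/-- Adjacency in the graph `G_n(r)`: vertices `1 ≤ i,j ≤ N_n` are joined iff
`U_{ij} ≤ g(dist(X_i,X_j)/r)`. -/
def adj (M : Model d P) (n : ℕ) (r : ℝ) (ω : Ω) (i j : ℕ) : Prop :=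
  i ≠ j ∧ 1 ≤ i ∧ 1 ≤ j ∧ i ≤ M.N n ω ∧ j ≤ M.N n ω ∧
    M.U (min i j) (max i j) ω ≤ M.g (torusDist (M.X i ω) (M.X j ω) / r)

/-- The degree of vertex `i` in `G_n(r)`. -/
def deg (M : Model d P) (n : ℕ) (r : ℝ) (ω : Ω) (i : ℕ) : ℕ :=
  {j : ℕ | adj M n r ω i j}.ncard

/-- `W_n(r)`, the number of isolated vertices of `G_n(r)`. -/
def isolatedCount (M : Model d P) (n : ℕ) (r : ℝ) (ω : Ω) : ℕ :=
  {i : ℕ | 1 ≤ i ∧ i ≤ M.N n ω ∧ deg M n r ω i = 0}.ncard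

section MeasureTheory

lemma setLIntegral_add_left_of_isAddFundamentalDomain {G : Type*} [AddCommGroup G]
    [MeasurableSpace G] [MeasurableAdd G] {Γ : AddSubgroup G} [Countable Γ] {μ : Measure G}
    [μ.IsAddLeftInvariant] {s : Set G} (hs : IsAddFundamentalDomain Γ s μ) {f : G → ENNReal}
    (hf : ∀ (γ : Γ) (x : G), f (γ +ᵥ x) = f x) (a : G) :
    ∫⁻ x in s, f (a + x) ∂μ = ∫⁻ x in s, f x ∂μ := by
  rw [(measurePreserving_add_left μ a).setLIntegral_comp_emb (measurableEmbedding_addLeft a)]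
  exact (hs.vadd_of_comm a).setLIntegral_eq hs f hf

lemma pi_prod_pi_setOf_forall_mem {ι α β : Type*} [Fintype ι] [MeasurableSpace α]
    [MeasurableSpace β] (μ : ι → Measure α) (ν : ι → Measure β) [∀ i, SigmaFinite (μ i)]
    [∀ i, SigmaFinite (ν i)] (S : ι → Set (α × β)) :
    (Measure.pi μ).prod (Measure.pi ν) {p | ∀ i, (p.1 i, p.2 i) ∈ S i} =
      ∏ i, (μ i).prod (ν i) (S i) := by
  rw [← (measurePreserving_arrowProdEquivProdArrow α β ι μ ν).measure_preimage_equiv,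
    ← Measure.pi_pi]
  congr 1
  ext p
  simp [MeasurableEquiv.arrowProdEquivProdArrow, Equiv.arrowProdEquivProdArrow]

lemma volume_restrict_Icc_zero_one_Ioi {a : ℝ} (ha : 0 ≤ a) :
    volume.restrict (Icc (0 : ℝ) 1) (Ioi a) = ENNReal.ofReal (1 - a) := by
  have hinter : Ioi a ∩ Icc 0 1 = Ioc a 1 := by
    ext x
    simp only [mem_inter_iff, mem_Ioi, mem_Icc, mem_Ioc]
    exact ⟨fun hx => ⟨hx.1, hx.2.2⟩, fun hx => ⟨hx.1, ha.trans hx.1.le, hx.2⟩⟩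
  rw [Measure.restrict_apply measurableSet_Ioi, hinter, Real.volume_Ioc]

lemma measurable_comp_of_antitoneOn_Ici {α : Type*} [MeasurableSpace α] {g : ℝ → ℝ} {a : ℝ}
    (hg : AntitoneOn g (Ici a)) {f : α → ℝ} (hf : Measurable f) (hfa : ∀ x, a ≤ f x) :
    Measurable fun x => g (f x) := by
  have hanti : Antitone fun t => g (max t a) := fun s t hst =>
    hg (mem_Ici.2 (le_max_right _ _)) (mem_Ici.2 (le_max_right _ _)) (max_le_max_right a hst)
  simpa only [Function.comp_def, max_eq_left (hfa _)] using hanti.measurable.comp hf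

lemma tendsto_setIntegral_compl_of_aecover {α ι : Type*} [MeasurableSpace α] {μ : Measure α}
    {E : Type*} [NormedAddCommGroup E] [NormedSpace ℝ E] {l : Filter ι} [l.IsCountablyGenerated]
    {φ : ι → Set α} (hφ : AECover μ l φ) {f : α → E} (hf : Integrable f μ) :
    Tendsto (fun i => ∫ x in (φ i)ᶜ, f x ∂μ) l (nhds 0) := by
  have hlim := (hφ.integral_tendsto_of_countably_generated hf).const_sub (∫ x, f x ∂μ)
  rw [sub_self] at hlim
  exact hlim.congr fun i => by
    rw [← integral_add_compl (hφ.measurableSet i) hf, add_sub_cancel_left]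

open scoped Pointwise Topology in
lemma aecover_inv_smul {E : Type*} [NormedAddCommGroup E] [NormedSpace ℝ E] [MeasurableSpace E]
    [BorelSpace E] (μ : Measure E) {s : Set E} (hs : MeasurableSet s) (h0 : s ∈ 𝓝 0) :
    AECover μ (𝓝[>] 0) fun r : ℝ => r⁻¹ • s where
  measurableSet r := hs.const_smul₀ r⁻¹
  ae_eventually_mem := ae_of_all _ fun x => by
    have hx : Tendsto (fun r : ℝ => r • x) (𝓝[>] 0) (𝓝 0) :=
      tendsto_nhdsWithin_of_tendsto_nhds (Continuous.tendsto' (by fun_prop) _ _ (zero_smul ℝ x))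
    filter_upwards [hx h0, self_mem_nhdsWithin] with r hr hr0
    exact (mem_inv_smul_set_iff₀ (ne_of_gt hr0) _ _).2 hr

open Asymptotics in
lemma isBigO_rpow_neg_one_add {c : ℝ} (hc : 0 ≤ c) :
    (fun s : ℝ => s ^ (-c)) =O[atTop] fun s => (1 + s) ^ (-c) := by
  refine IsBigO.of_bound (2 ^ c) ?_
  filter_upwards [eventually_ge_atTop 1] with s hs
  rw [Real.norm_of_nonneg (by positivity), Real.norm_of_nonneg (by positivity)]
  calc s ^ (-c) ≤ (2⁻¹ * (1 + s)) ^ (-c) :=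
        Real.rpow_le_rpow_of_nonpos (by positivity) (by linarith) (neg_nonpos.2 hc)
    _ = 2 ^ c * (1 + s) ^ (-c) := by
        rw [Real.mul_rpow (by positivity) (by positivity), Real.inv_rpow (by positivity),
          Real.rpow_neg zero_le_two, inv_inv]

open Asymptotics in
lemma integrable_mul_log_one_add_norm {E : Type*} [NormedAddCommGroup E] [NormedSpace ℝ E]
    [FiniteDimensional ℝ E] [MeasurableSpace E] [BorelSpace E] {μ : Measure E}
    [μ.IsAddHaarMeasure] {g : ℝ → ℝ} {c : ℝ} (hint : LocallyIntegrable (fun x => g ‖x‖) μ)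
    (hc : Module.finrank ℝ E < c) (hg : g =O[atTop] fun s => s ^ (-c)) :
    Integrable (fun x => g ‖x‖ * Real.log (1 + ‖x‖)) μ := by
  obtain ⟨c', hdc', hc'⟩ := exists_between hc
  have hshift : Tendsto (fun s : ℝ => 1 + s) atTop atTop :=
    tendsto_atTop_add_const_left _ _ tendsto_id
  have hlog : (fun s => Real.log (1 + s)) =O[atTop] fun s => (1 + s) ^ (c - c') :=
    ((isLittleO_log_rpow_atTop (sub_pos.2 hc')).comp_tendsto hshift).isBigO
  have hc0 : 0 ≤ c := (Nat.cast_nonneg _).trans hc.le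
  have hprod : (fun s => g s * Real.log (1 + s)) =O[atTop] fun s => (1 + s) ^ (-c') := by
    refine ((hg.trans (isBigO_rpow_neg_one_add hc0)).mul hlog).congr' .rfl ?_
    filter_upwards [eventually_ge_atTop 0] with s hs
    rw [← Real.rpow_add (by positivity)]
    ring_nf
  refine LocallyIntegrable.integrable_of_isBigO_cocompact ?_
    (hprod.comp_tendsto tendsto_norm_cocompact_atTop)
    ((integrable_one_add_norm hdc').integrableAtFilter _)
  exact hint.mul_continuous <| (continuous_const.add continuous_norm).log fun x =>
    (by positivity : 0 < 1 + ‖x‖).ne'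

end MeasureTheory

section Probability

lemma lintegral_comp_of_indepFun [IsFiniteMeasure P] {β γ : Type*} [MeasurableSpace β]
    [MeasurableSpace γ] {Y : Ω → β} {Z : Ω → γ} (hYZ : IndepFun Y Z P) (hY : Measurable Y)
    (hZ : Measurable Z) {f : β × γ → ENNReal} (hf : Measurable f) :
    ∫⁻ ω, f (Y ω, Z ω) ∂P = ∫⁻ ω, ∫⁻ ω', f (Y ω, Z ω') ∂P ∂P := by
  rw [← lintegral_map hf (hY.prodMk hZ),
    hYZ.map_prod_eq_prod_map_map hY.aemeasurable hZ.aemeasurable, lintegral_prod _ hf.aemeasurable,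
    lintegral_map hf.lintegral_prod_right' hY]
  exact lintegral_congr fun ω => lintegral_map (hf.comp measurable_prodMk_left) hZ

lemma hasSum_poisson_mul_pow_pred (a p : ℝ) :
    HasSum (fun k : ℕ => k * p ^ (k - 1) * (Real.exp (-a) * a ^ k / k.factorial))
      (a * Real.exp (-(a * (1 - p)))) := by
  refine (hasSum_nat_add_iff' 1).1 ?_
  have hexp := (NormedSpace.expSeries_div_hasSum_exp (a * p)).mul_left (a * Real.exp (-a))
  have hsum : a * Real.exp (-a) * NormedSpace.exp (a * p) = a * Real.exp (-(a * (1 - p))) := by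
    rw [← Real.exp_eq_exp_ℝ, mul_assoc, ← Real.exp_add]
    ring_nf
  rw [hsum] at hexp
  simp only [Finset.range_one, Finset.sum_singleton, Nat.cast_zero, zero_mul, sub_zero]
  refine hexp.congr_fun fun k => ?_
  rw [Nat.factorial_succ, Nat.add_sub_cancel]
  push_cast
  field_simp
  ring

lemma lintegral_mul_pow_pred_poissonMeasure (a : NNReal) {p : ℝ} (hp : 0 ≤ p) :
    ∫⁻ k : ℕ, ENNReal.ofReal (k * p ^ (k - 1)) ∂poissonMeasure a =
      ENNReal.ofReal (a * Real.exp (-(a * (1 - p)))) := by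
  have hsum := hasSum_poisson_mul_pow_pred a p
  rw [lintegral_countable', ← hsum.tsum_eq,
    ENNReal.ofReal_tsum_of_nonneg (fun k => by positivity) hsum.summable]
  refine tsum_congr fun k => ?_
  rw [poissonMeasure_singleton, ← ENNReal.ofReal_mul (by positivity)]

end Probability

section Asymptotics

open Asymptotics Topology

lemma tendsto_log_add_atTop (b : ℝ) : Tendsto (fun x => Real.log x + b) atTop atTop :=
  tendsto_atTop_add_const_right _ _ Real.tendsto_log_atTop

lemma tendsto_log_add_div_mul {a : ℝ} (ha : 0 < a) (b : ℝ) :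
    Tendsto (fun x => (Real.log x + b) / (a * x)) atTop (𝓝[>] 0) := by
  refine tendsto_nhdsWithin_iff.2 ⟨?_, ?_⟩
  · have ho : (fun x => Real.log x + b) =o[atTop] fun x => a * x :=
      (Real.isLittleO_log_id_atTop.add (isLittleO_const_id_atTop b)).trans_isBigO
        (isBigO_self_const_mul ha.ne' _ _)
    exact ho.tendsto_div_nhds_zero
  · filter_upwards [(tendsto_log_add_atTop b).eventually_gt_atTop 0, eventually_gt_atTop 0]
      with x hL hx
    exact div_pos hL (mul_pos ha hx)

lemma isEquivalent_log_add_div_mul {a : ℝ} (ha : 0 < a) (b : ℝ) :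
    (fun x => -Real.log ((Real.log x + b) / (a * x))) ~[atTop] fun x => Real.log x + b := by
  have hL := tendsto_log_add_atTop b
  have hlogL : (fun x => Real.log (Real.log x + b)) =o[atTop] fun x => Real.log x + b :=
    Real.isLittleO_log_id_atTop.comp_tendsto hL
  have hconst : (fun _ => Real.log a - b) =o[atTop] fun x => Real.log x + b :=
    (isLittleO_const_id_atTop _).comp_tendsto hL
  refine (IsEquivalent.refl.add_isLittleO (hconst.sub hlogL)).congr_left ?_
  filter_upwards [hL.eventually_gt_atTop 0, eventually_gt_atTop 0] with x hLx hx
  rw [Real.log_div hLx.ne' (by positivity), Real.log_mul ha.ne' hx.ne']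
  simp only [Pi.add_apply]
  ring

end Asymptotics

section Torus

/-- The inclusion `ℤ^d → ℝ^d` of the lattice that defines the torus, as a homomorphism. -/
def latticeHom (d : ℕ) : (Fin d → ℤ) →+ EuclideanSpace ℝ (Fin d) where
  toFun z := (WithLp.equiv 2 (Fin d → ℝ)).symm (fun i => (z i : ℝ))
  map_zero' := by ext i; simp
  map_add' x y := by ext i; simp

@[simp]
lemma latticeHom_apply (z : Fin d → ℤ) (i : Fin d) : latticeHom d z i = z i := rfl

instance : Countable (latticeHom d).range :=
  (countable_range (latticeHom d)).to_subtype

lemma torusDist_eq_iInf (x y : EuclideanSpace ℝ (Fin d)) :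
    torusDist x y = ⨅ z, ‖x - y - latticeHom d z‖ := rfl

lemma torusDist_nonneg (x y : EuclideanSpace ℝ (Fin d)) : 0 ≤ torusDist x y :=
  Real.iInf_nonneg fun _ => norm_nonneg _

lemma measurable_torusDist :
    Measurable fun p : EuclideanSpace ℝ (Fin d) × EuclideanSpace ℝ (Fin d) =>
      torusDist p.1 p.2 := by
  refine Measurable.iInf fun z => ?_
  fun_prop

lemma torusDist_self_add (x y : EuclideanSpace ℝ (Fin d)) :
    torusDist x (x + y) = torusDist 0 y := by
  simp only [torusDist_eq_iInf, sub_add_cancel_left, zero_sub]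

lemma torusDist_lattice_add (x y : EuclideanSpace ℝ (Fin d)) (w : Fin d → ℤ) :
    torusDist x (latticeHom d w + y) = torusDist x y := by
  simp only [torusDist_eq_iInf]
  rw [← (Equiv.subRight w).iInf_comp]
  congr! 3 with z
  simp only [Equiv.subRight_apply, map_sub]
  abel

lemma abs_le_abs_add_intCast {t : ℝ} (ht : |t| ≤ 1 / 2) (m : ℤ) : |t| ≤ |t + m| := by
  rcases eq_or_ne m 0 with rfl | hm
  · simp
  · have hm1 : (1 : ℝ) ≤ |(m : ℝ)| := by exact_mod_cast Int.one_le_abs hm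
    have htri : |(m : ℝ)| - |t| ≤ |t + m| := by
      simpa [add_comm] using abs_sub_abs_le_abs_sub (m : ℝ) (-t)
    linarith

lemma torusDist_zero_of_mem_cube {y : EuclideanSpace ℝ (Fin d)} (hy : y ∈ cube d) :
    torusDist 0 y = ‖y‖ := by
  rw [torusDist_eq_iInf]
  refine le_antisymm ?_ (le_ciInf fun z => ?_)
  · refine (ciInf_le ⟨0, ?_⟩ 0).trans (by simp)
    rintro _ ⟨z, rfl⟩
    exact norm_nonneg _
  · rw [zero_sub, ← neg_add', norm_neg, EuclideanSpace.norm_eq, EuclideanSpace.norm_eq]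
    gcongr with i
    exact abs_le_abs_add_intCast (abs_le.2 ⟨(hy i).1.le, (hy i).2⟩) (z i)

lemma cube_eq_iInter :
    cube d = ⋂ i, (fun x : EuclideanSpace ℝ (Fin d) => x i) ⁻¹' Ioc (-(1 / 2)) (1 / 2) := by
  ext x
  simp [cube]

lemma measurableSet_cube : MeasurableSet (cube d) := by
  rw [cube_eq_iInter]
  exact MeasurableSet.iInter fun i => measurableSet_Ioc.preimage (by fun_prop)

open scoped Topology in
lemma cube_mem_nhds_zero : cube d ∈ 𝓝 0 := by
  rw [cube_eq_iInter, Filter.iInter_mem]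
  intro i
  have hi : Tendsto (fun x : EuclideanSpace ℝ (Fin d) => x i) (𝓝 0) (𝓝 0) :=
    Continuous.tendsto' (by fun_prop) _ _ rfl
  exact hi (Ioc_mem_nhds (by norm_num) (by norm_num))

lemma half_le_norm_of_notMem_cube {x : EuclideanSpace ℝ (Fin d)} (hx : x ∉ cube d) :
    1 / 2 ≤ ‖x‖ := by
  contrapose! hx
  intro i
  have hi : |x i| < 1 / 2 := (PiLp.norm_apply_le x i).trans_lt hx
  exact ⟨(abs_lt.1 hi).1, (abs_lt.1 hi).2.le⟩

lemma volume_cube : volume (cube d) = 1 := by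
  have hcube : cube d = (MeasurableEquiv.toLp 2 (Fin d → ℝ)).symm ⁻¹'
      univ.pi fun _ => Ioc (-(1 / 2)) (1 / 2) := by
    ext x
    simp [cube]
  rw [hcube, (EuclideanSpace.volume_preserving_symm_measurableEquiv_toLp
    (Fin d)).measure_preimage_equiv, Real.volume_pi_Ioc]
  norm_num

instance : IsProbabilityMeasure (volume.restrict (cube d)) :=
  ⟨by rw [Measure.restrict_apply_univ, volume_cube]⟩

lemma isAddFundamentalDomain_cube :
    IsAddFundamentalDomain (latticeHom d).range (cube d) volume := by
  refine IsAddFundamentalDomain.mk' measurableSet_cube.nullMeasurableSet fun x => ?_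
  have hcoord (i : Fin d) : ∃! m : ℤ, x i + m ∈ Ioc (-(1 / 2) : ℝ) (1 / 2) := by
    have hunique := existsUnique_add_zsmul_mem_Ioc (zero_lt_one (α := ℝ)) (x i) (-(1 / 2))
    norm_num at hunique ⊢
    exact hunique
  choose m hm hm_unique using hcoord
  refine ⟨⟨latticeHom d m, m, rfl⟩, fun i => ?_, ?_⟩
  · simpa [AddSubgroup.vadd_def, add_comm] using hm i
  · rintro ⟨_, z, rfl⟩ hz
    congr 2
    ext i
    refine hm_unique i (z i) ?_
    simpa [AddSubgroup.vadd_def, add_comm] using hz i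

lemma setLIntegral_cube_torusDist (F : ℝ → ENNReal) (x : EuclideanSpace ℝ (Fin d)) :
    ∫⁻ y in cube d, F (torusDist x y) = ∫⁻ y in cube d, F ‖y‖ := by
  have hperiodic (γ : (latticeHom d).range) (y : EuclideanSpace ℝ (Fin d)) :
      F (torusDist x (γ +ᵥ y)) = F (torusDist x y) := by
    obtain ⟨_, z, rfl⟩ := γ
    exact congrArg F (torusDist_lattice_add x y z)
  rw [← setLIntegral_add_left_of_isAddFundamentalDomain isAddFundamentalDomain_cube hperiodic x]
  refine setLIntegral_congr_fun measurableSet_cube fun y hy => ?_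
  simp only [torusDist_self_add, torusDist_zero_of_mem_cube hy]

end Torus

namespace Model

section IsolatedVertices

/-- The sample space of the positions and edge variables, without the number of vertices. -/
abbrev Config (d : ℕ) : Type := (ℕ → EuclideanSpace ℝ (Fin d)) × (ℕ × ℕ → ℝ)

/-- The random positions and edge variables of the model, as one random element. -/
def config (M : Model d P) (ω : Ω) : Config d :=
  (fun i => M.X i ω, fun p => M.U p.1 p.2 ω)

/-- The event that vertex `i` is joined to none of the vertices in `J`, as a set of
configurations. -/
def noEdge (M : Model d P) (r : ℝ) (i : ℕ) (J : Finset ℕ) : Set (Config d) :=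
  {z | ∀ j ∈ J, M.g (torusDist (z.1 i) (z.1 j) / r) < z.2 (min i j, max i j)}

/-- The number of isolated vertices when the vertex set is `{1, …, k}`, valued in `ℝ≥0∞`. -/
def isolatedIn (M : Model d P) (r : ℝ) (k : ℕ) (z : Config d) : ENNReal :=
  ∑ i ∈ Finset.Icc 1 k, (M.noEdge r i ((Finset.Icc 1 k).erase i)).indicator 1 z

/-- The probability that two independent uniform points of the torus are joined, computed with one
of them translated to the origin. -/
def edgeProb (M : Model d P) (r : ℝ) : ℝ := ∫ y in cube d, M.g (‖y‖ / r)

lemma measurable_config (M : Model d P) : Measurable M.config := by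
  have hX := M.X_meas
  have hU := M.U_meas
  exact Measurable.prodMk (by fun_prop) (by fun_prop)

lemma map_N (M : Model d P) (n : ℕ) : P.map (M.N n) = poissonMeasure n := by
  refine Measure.ext_of_singleton fun k => ?_
  rw [Measure.map_apply (M.N_meas n) (measurableSet_singleton k), poissonMeasure_singleton]
  exact M.N_poisson n k

lemma indepFun_X_U (M : Model d P) :
    IndepFun (fun ω (i : ℕ) => M.X i ω) (fun ω (p : ℕ × ℕ) => M.U p.1 p.2 ω) P := by
  rw [IndepFun_iff_Indep]
  exact M.families_indep.indep (i := 0) (j := 2) (by decide)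

lemma indepFun_N_config (M : Model d P) (n : ℕ) : IndepFun (M.N n) M.config P := by
  have hX := M.X_meas
  have hU := M.U_meas
  have hN := M.N_meas
  suffices h : IndepFun (fun ω (n : ℕ) => M.N n ω) M.config P from
    h.comp (measurable_pi_apply n) measurable_id
  have hcomap : MeasurableSpace.comap M.config inferInstance =
      MeasurableSpace.comap (fun ω (i : ℕ) => M.X i ω) inferInstance ⊔
        MeasurableSpace.comap (fun ω (p : ℕ × ℕ) => M.U p.1 p.2 ω) inferInstance :=
    MeasurableSpace.comap_prodMk _ _
  rw [IndepFun_iff_Indep, hcomap]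
  have hindep := indep_iSup_of_disjoint (S := {1}) (T := {0, 2}) ?_ M.families_indep (by simp)
  · simpa [iSup_or, iSup_sup_eq] using hindep
  · intro i
    fin_cases i <;> exact Measurable.comap_le (by fun_prop)

lemma map_X_finset (M : Model d P) {J : Finset ℕ} (hJ : ∀ j ∈ J, 1 ≤ j) :
    P.map (fun ω (j : J) => M.X j ω) = Measure.pi fun _ => volume.restrict (cube d) := by
  have hX := M.X_meas
  have hindep : iIndepFun (fun j : J => M.X j) P :=
    M.X_indep.precomp (g := fun j : J => (⟨j, hJ j j.2⟩ : {i : ℕ // 1 ≤ i}))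
      fun a b h => Subtype.ext (by simpa using h)
  rw [hindep.map_fun_eq_pi_map (by fun_prop)]
  exact congrArg Measure.pi (funext fun j => M.X_unif j (hJ j j.2))

lemma indepFun_X_finset (M : Model d P) {i : ℕ} (hi : 1 ≤ i) {J : Finset ℕ}
    (hJ : ∀ j ∈ J, 1 ≤ j) (hiJ : i ∉ J) :
    IndepFun (M.X i) (fun ω (j : J) => M.X j ω) P := by
  have h := M.X_indep.indepFun_finset {⟨i, hi⟩} (J.subtype (1 ≤ ·))
    (by simpa using hiJ) (fun j => M.X_meas j)
  exact h.comp (measurable_pi_apply ⟨⟨i, hi⟩, by simp⟩)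
    (measurable_pi_lambda (fun v (j : J) => v ⟨⟨j, hJ j j.2⟩, by simp⟩)
      fun j => measurable_pi_apply _)

lemma map_U_finset (M : Model d P) {i : ℕ} (hi : 1 ≤ i) {J : Finset ℕ}
    (hJ : ∀ j ∈ J, 1 ≤ j) (hiJ : i ∉ J) :
    P.map (fun ω (j : J) => M.U (min i j) (max i j) ω) =
      Measure.pi fun _ => volume.restrict (Icc 0 1) := by
  have hU := M.U_meas
  have hne (j : J) : i ≠ j := fun h => hiJ (h ▸ j.2)
  have hlt (j : J) : 1 ≤ min i j ∧ min i j < max i (j : ℕ) :=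
    ⟨le_min hi (hJ j j.2), min_lt_max.2 (hne j)⟩
  have hindep : iIndepFun (fun j : J => M.U (min i j) (max i j)) P := by
    refine M.U_indep.precomp (g := fun j : J => (⟨(min i j, max i j), hlt j⟩ :
      {p : ℕ × ℕ // 1 ≤ p.1 ∧ p.1 < p.2})) fun a b hab => ?_
    simp only [Subtype.mk.injEq, Prod.mk.injEq] at hab
    exact Subtype.ext (by omega)
  rw [hindep.map_fun_eq_pi_map (by fun_prop)]
  exact congrArg Measure.pi (funext fun j => M.U_unif _ _ (hlt j).1 (hlt j).2)

lemma map_X_X_finset_U_finset [IsProbabilityMeasure P] (M : Model d P) {i : ℕ} (hi : 1 ≤ i)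
    {J : Finset ℕ} (hJ : ∀ j ∈ J, 1 ≤ j) (hiJ : i ∉ J) :
    P.map (fun ω => (M.X i ω, fun j : J => M.X j ω, fun j : J => M.U (min i j) (max i j) ω)) =
      (volume.restrict (cube d)).prod
        ((Measure.pi fun _ : J => volume.restrict (cube d)).prod
          (Measure.pi fun _ : J => volume.restrict (Icc (0 : ℝ) 1))) := by
  have hX := M.X_meas
  have hU := M.U_meas
  have hXU := M.indepFun_X_U.comp (φ := fun x => (x i, fun j : J => x j))
    (ψ := fun u => fun j : J => u (min i j, max i j)) (by fun_prop) (by fun_prop)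
  rw [← Measure.prodAssoc_prod, ← M.map_X_finset hJ, ← M.map_U_finset hi hJ hiJ, ← M.X_unif i hi,
    ← (M.indepFun_X_finset hi hJ hiJ).map_prod_eq_prod_map_map (by fun_prop) (by fun_prop)]
  have hprod := hXU.map_prod_eq_prod_map_map (by fun_prop) (by fun_prop)
  simp only [Function.comp_def] at hprod
  rw [← hprod, Measure.map_map (by fun_prop) (by fun_prop)]
  rfl

lemma measurable_g_torusDist (M : Model d P) {r : ℝ} (hr : 0 < r) {β : Type*}
    [MeasurableSpace β] {f h : β → EuclideanSpace ℝ (Fin d)} (hf : Measurable f)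
    (hh : Measurable h) : Measurable fun x => M.g (torusDist (f x) (h x) / r) :=
  measurable_comp_of_antitoneOn_Ici M.g_antitone
    ((measurable_torusDist.comp (hf.prodMk hh)).div_const r)
    fun _ => div_nonneg (torusDist_nonneg _ _) hr.le

lemma measurableSet_noEdge (M : Model d P) {r : ℝ} (hr : 0 < r) (i : ℕ) (J : Finset ℕ) :
    MeasurableSet (M.noEdge r i J) := by
  simp only [noEdge, ofPred_forall]
  exact J.measurableSet_biInter fun j _ => measurableSet_lt
    (M.measurable_g_torusDist hr (by fun_prop) (by fun_prop)) (by fun_prop)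

lemma measurable_uncurry_isolatedIn (M : Model d P) {r : ℝ} (hr : 0 < r) :
    Measurable fun p : ℕ × Config d => M.isolatedIn r p.1 p.2 := by
  have hvertexCount (k : ℕ) : Measurable (M.isolatedIn r k) := Finset.measurable_sum _ fun _ _ =>
    measurable_one.indicator (M.measurableSet_noEdge hr _ _)
  exact measurable_from_prod_countable_right hvertexCount

lemma integrableOn_g_cube (M : Model d P) {r : ℝ} (hr : 0 < r) :
    IntegrableOn (fun y => M.g (‖y‖ / r)) (cube d) := by
  have hmem (y : EuclideanSpace ℝ (Fin d)) := M.g_mem (‖y‖ / r) (by positivity)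
  refine Integrable.of_bound (C := 1) (measurable_comp_of_antitoneOn_Ici M.g_antitone
    (by fun_prop) fun y => by positivity).aestronglyMeasurable (ae_of_all _ fun y => ?_)
  rw [Real.norm_of_nonneg (hmem y).1]
  exact (hmem y).2

lemma one_sub_edgeProb (M : Model d P) {r : ℝ} (hr : 0 < r) :
    1 - M.edgeProb r = ∫ y in cube d, (1 - M.g (‖y‖ / r)) := by
  rw [integral_sub (integrable_const _) (M.integrableOn_g_cube hr), edgeProb]
  simp

lemma edgeProb_le_one (M : Model d P) {r : ℝ} (hr : 0 < r) : M.edgeProb r ≤ 1 := by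
  rw [← sub_nonneg, M.one_sub_edgeProb hr]
  exact integral_nonneg fun y => sub_nonneg.2 (M.g_mem (‖y‖ / r) (by positivity)).2

lemma prod_setOf_g_torusDist_lt (M : Model d P) {r : ℝ} (hr : 0 < r)
    (x : EuclideanSpace ℝ (Fin d)) :
    (volume.restrict (cube d)).prod (volume.restrict (Icc 0 1))
      {p | M.g (torusDist x p.1 / r) < p.2} = ENNReal.ofReal (1 - M.edgeProb r) := by
  have hdist (y : EuclideanSpace ℝ (Fin d)) : 0 ≤ torusDist x y / r :=
    div_nonneg (torusDist_nonneg _ _) hr.le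
  have hle (y : EuclideanSpace ℝ (Fin d)) : 0 ≤ 1 - M.g (‖y‖ / r) :=
    sub_nonneg.2 (M.g_mem (‖y‖ / r) (by positivity)).2
  calc (volume.restrict (cube d)).prod (volume.restrict (Icc 0 1))
        {p | M.g (torusDist x p.1 / r) < p.2}
    _ = ∫⁻ y in cube d, volume.restrict (Icc 0 1) (Ioi (M.g (torusDist x y / r))) :=
        Measure.prod_apply <| measurableSet_lt
          (M.measurable_g_torusDist hr measurable_const measurable_fst) measurable_snd
    _ = ∫⁻ y in cube d, ENNReal.ofReal (1 - M.g (torusDist x y / r)) :=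
        lintegral_congr fun y => volume_restrict_Icc_zero_one_Ioi (M.g_mem _ (hdist y)).1
    _ = ∫⁻ y in cube d, ENNReal.ofReal (1 - M.g (‖y‖ / r)) :=
        setLIntegral_cube_torusDist (fun s => ENNReal.ofReal (1 - M.g (s / r))) x
    _ = ENNReal.ofReal (1 - M.edgeProb r) := by
        rw [M.one_sub_edgeProb hr]
        exact (ofReal_integral_eq_lintegral_ofReal
          ((integrable_const 1).sub (M.integrableOn_g_cube hr)) (ae_of_all _ hle)).symm

lemma measure_config_preimage_noEdge [IsProbabilityMeasure P] (M : Model d P) {r : ℝ}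
    (hr : 0 < r) {i : ℕ} (hi : 1 ≤ i) {J : Finset ℕ} (hJ : ∀ j ∈ J, 1 ≤ j) (hiJ : i ∉ J) :
    P (M.config ⁻¹' M.noEdge r i J) = ENNReal.ofReal (1 - M.edgeProb r) ^ J.card := by
  have hX := M.X_meas
  have hU := M.U_meas
  set S : EuclideanSpace ℝ (Fin d) → Set (EuclideanSpace ℝ (Fin d) × ℝ) :=
    fun x => {p | M.g (torusDist x p.1 / r) < p.2}
  set B : Set (EuclideanSpace ℝ (Fin d) × (J → EuclideanSpace ℝ (Fin d)) × (J → ℝ)) :=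
    {q | ∀ j, (q.2.1 j, q.2.2 j) ∈ S q.1}
  have hB : MeasurableSet B := by
    simp only [B, S, mem_ofPred_eq, ofPred_forall]
    exact MeasurableSet.iInter fun j => measurableSet_lt
      (M.measurable_g_torusDist hr (by fun_prop) (by fun_prop)) (by fun_prop)
  have hpreimage : M.config ⁻¹' M.noEdge r i J = (fun ω =>
      (M.X i ω, fun j : J => M.X j ω, fun j : J => M.U (min i j) (max i j) ω)) ⁻¹' B := by
    ext ω
    simp [noEdge, config, B, S]
  rw [hpreimage, ← Measure.map_apply (by fun_prop) hB, M.map_X_X_finset_U_finset hi hJ hiJ,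
    Measure.prod_apply hB]
  have hslice (x : EuclideanSpace ℝ (Fin d)) :
      ((Measure.pi fun _ : J => volume.restrict (cube d)).prod
        (Measure.pi fun _ : J => volume.restrict (Icc (0 : ℝ) 1))) (Prod.mk x ⁻¹' B) =
        ENNReal.ofReal (1 - M.edgeProb r) ^ J.card := by
    refine (pi_prod_pi_setOf_forall_mem _ _ fun _ => S x).trans ?_
    simp [S, M.prod_setOf_g_torusDist_lt hr x]
  simp only [hslice, lintegral_const, measure_univ, mul_one]

lemma lintegral_isolatedIn_config [IsProbabilityMeasure P] (M : Model d P) {r : ℝ} (hr : 0 < r)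
    (k : ℕ) :
    ∫⁻ ω, M.isolatedIn r k (M.config ω) ∂P =
      ENNReal.ofReal (k * (1 - M.edgeProb r) ^ (k - 1)) := by
  have hvertex (i : ℕ) (hi : i ∈ Finset.Icc 1 k) :
      ∫⁻ ω, (M.noEdge r i ((Finset.Icc 1 k).erase i)).indicator 1 (M.config ω) ∂P =
        ENNReal.ofReal (1 - M.edgeProb r) ^ (k - 1) := by
    have hpos : ∀ j ∈ (Finset.Icc 1 k).erase i, 1 ≤ j := fun j hj =>
      (Finset.mem_Icc.1 (Finset.mem_of_mem_erase hj)).1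
    calc _ = P (M.config ⁻¹' M.noEdge r i ((Finset.Icc 1 k).erase i)) :=
          lintegral_indicator_one (M.measurable_config (M.measurableSet_noEdge hr _ _))
      _ = ENNReal.ofReal (1 - M.edgeProb r) ^ (k - 1) := by
          rw [M.measure_config_preimage_noEdge hr (Finset.mem_Icc.1 hi).1 hpos
            (Finset.notMem_erase i _), Finset.card_erase_of_mem hi, Nat.card_Icc,
            Nat.add_sub_cancel]
  have hmeas (i : ℕ) : Measurable fun ω =>
      (M.noEdge r i ((Finset.Icc 1 k).erase i)).indicator (1 : Config d → ENNReal) (M.config ω) :=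
    (measurable_one.indicator (M.measurableSet_noEdge hr _ _)).comp M.measurable_config
  simp only [isolatedIn]
  rw [lintegral_finsetSum _ fun i _ => hmeas i, Finset.sum_congr rfl hvertex, Finset.sum_const,
    Nat.card_Icc, Nat.add_sub_cancel, nsmul_eq_mul, ENNReal.ofReal_mul (by positivity),
    ENNReal.ofReal_natCast, ENNReal.ofReal_pow (sub_nonneg.2 (M.edgeProb_le_one hr))]

lemma deg_eq_zero_iff (M : Model d P) {n : ℕ} {r : ℝ} {ω : Ω} {i : ℕ}
    (hi : i ∈ Finset.Icc 1 (M.N n ω)) :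
    deg M n r ω i = 0 ↔ M.config ω ∈ M.noEdge r i ((Finset.Icc 1 (M.N n ω)).erase i) := by
  have hfin : {j | adj M n r ω i j}.Finite :=
    (Set.finite_Iic (M.N n ω)).subset fun j hj => hj.2.2.2.2.1
  rw [deg, Set.ncard_eq_zero hfin, Set.eq_empty_iff_forall_notMem]
  rw [Finset.mem_Icc] at hi
  simp only [mem_ofPred_eq, adj, noEdge, config, Finset.mem_erase, Finset.mem_Icc, ← not_le]
  exact forall_congr' fun j => by tauto

lemma isolatedCount_eq_isolatedIn (M : Model d P) (n : ℕ) (r : ℝ) (ω : Ω) :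
    (isolatedCount M n r ω : ENNReal) = M.isolatedIn r (M.N n ω) (M.config ω) := by
  classical
  have hset : {i : ℕ | 1 ≤ i ∧ i ≤ M.N n ω ∧ deg M n r ω i = 0} =
      ↑((Finset.Icc 1 (M.N n ω)).filter fun i =>
        M.config ω ∈ M.noEdge r i ((Finset.Icc 1 (M.N n ω)).erase i)) := by
    ext i
    rw [Finset.coe_filter, mem_ofPred_eq, mem_ofPred_eq, ← and_assoc, ← Finset.mem_Icc]
    exact and_congr_right M.deg_eq_zero_iff
  rw [isolatedCount, hset, Set.ncard_coe_finset, Finset.natCast_card_filter]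
  simp only [isolatedIn, indicator_apply, Pi.one_apply]

lemma lintegral_isolatedCount [IsProbabilityMeasure P] (M : Model d P) (n : ℕ) {r : ℝ}
    (hr : 0 < r) :
    ∫⁻ ω, (isolatedCount M n r ω : ENNReal) ∂P =
      ENNReal.ofReal (n * Real.exp (-(n * M.edgeProb r))) := by
  calc ∫⁻ ω, (isolatedCount M n r ω : ENNReal) ∂P
      = ∫⁻ ω, M.isolatedIn r (M.N n ω) (M.config ω) ∂P := by
        simp only [isolatedCount_eq_isolatedIn]
    _ = ∫⁻ ω, ∫⁻ ω', M.isolatedIn r (M.N n ω) (M.config ω') ∂P ∂P :=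
        lintegral_comp_of_indepFun (M.indepFun_N_config n) (M.N_meas n) M.measurable_config
          (M.measurable_uncurry_isolatedIn hr)
    _ = ∫⁻ ω, ENNReal.ofReal (M.N n ω * (1 - M.edgeProb r) ^ (M.N n ω - 1)) ∂P := by
        simp only [M.lintegral_isolatedIn_config hr]
    _ = ∫⁻ k : ℕ, ENNReal.ofReal (k * (1 - M.edgeProb r) ^ (k - 1)) ∂poissonMeasure n := by
        rw [← M.map_N n, lintegral_map (measurable_of_countable _) (M.N_meas n)]
    _ = ENNReal.ofReal (n * Real.exp (-(n * M.edgeProb r))) := by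
        rw [lintegral_mul_pow_pred_poissonMeasure _ (sub_nonneg.2 (M.edgeProb_le_one hr))]
        simp

lemma measurable_isolatedCount (M : Model d P) (n : ℕ) {r : ℝ} (hr : 0 < r) :
    Measurable fun ω => (isolatedCount M n r ω : ENNReal) := by
  simpa only [isolatedCount_eq_isolatedIn] using!
    (M.measurable_uncurry_isolatedIn hr).comp ((M.N_meas n).prodMk M.measurable_config)

lemma integral_isolatedCount [IsProbabilityMeasure P] (M : Model d P) (n : ℕ) {r : ℝ}
    (hr : 0 < r) :
    ∫ ω, (isolatedCount M n r ω : ℝ) ∂P = n * Real.exp (-(n * M.edgeProb r)) := by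
  have htoReal := integral_toReal (M.measurable_isolatedCount n hr).aemeasurable (μ := P)
    (ae_of_all _ fun ω => ENNReal.natCast_lt_top _)
  simp only [ENNReal.toReal_natCast] at htoReal
  rw [htoReal, M.lintegral_isolatedCount n hr, ENNReal.toReal_ofReal (by positivity)]

end IsolatedVertices
section CriticalRadius

open Asymptotics
open scoped Pointwise Topology

/-- The mass of the connection function outside the unit cube rescaled by `r⁻¹`, i.e. the part of
`α` that the torus of side `r⁻¹` does not see. -/
def tailMass (M : Model d P) (r : ℝ) : ℝ :=
  ∫ u in (r⁻¹ • cube d)ᶜ, M.g ‖u‖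

/-- The radius `r_x(b)` with `r_x(b)^d = (log x + b) / (α x)`, for a real parameter `x`. -/
def critRadius (M : Model d P) (b x : ℝ) : ℝ :=
  ((Real.log x + b) / (M.α * x)) ^ ((1 : ℝ) / d)

lemma edgeProb_eq (M : Model d P) {r : ℝ} (hr : 0 < r) :
    M.edgeProb r = r ^ d * (M.α - M.tailMass r) := by
  have hscale := Measure.setIntegral_comp_smul_of_pos volume
    (fun u : EuclideanSpace ℝ (Fin d) => M.g ‖u‖) (cube d) (inv_pos.2 hr)
  have hsplit := integral_add_compl (measurableSet_cube.const_smul₀ r⁻¹) M.g_integrable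
  calc M.edgeProb r = ∫ y in cube d, M.g ‖r⁻¹ • y‖ := by
        simp only [edgeProb, norm_smul, Real.norm_of_nonneg (inv_pos.2 hr).le, div_eq_inv_mul]
    _ = r ^ d * ∫ u in r⁻¹ • cube d, M.g ‖u‖ := by
        rw [hscale, finrank_euclideanSpace_fin, inv_pow, inv_inv, smul_eq_mul]
    _ = r ^ d * (M.α - M.tailMass r) := by
        rw [tailMass, M.α_def, ← hsplit, add_sub_cancel_right]

lemma tailMass_nonneg (M : Model d P) (r : ℝ) : 0 ≤ M.tailMass r :=
  integral_nonneg fun u => (M.g_mem ‖u‖ (norm_nonneg u)).1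

lemma log_inv_le_of_notMem_inv_smul_cube {r : ℝ} (hr : 0 < r) {u : EuclideanSpace ℝ (Fin d)}
    (hu : u ∉ r⁻¹ • cube d) : Real.log r⁻¹ ≤ 2 * Real.log (1 + ‖u‖) := by
  rw [mem_inv_smul_set_iff₀ hr.ne'] at hu
  have hnorm : 1 / 2 ≤ r * ‖u‖ := by
    simpa only [norm_smul, Real.norm_of_nonneg hr.le] using half_le_norm_of_notMem_cube hu
  have hinv : r⁻¹ ≤ 2 * ‖u‖ := (inv_le_iff_one_le_mul₀' hr).2 (by linarith)
  calc Real.log r⁻¹ ≤ Real.log ((1 + ‖u‖) ^ 2) := by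
        gcongr
        nlinarith [sq_nonneg ‖u‖]
    _ = 2 * Real.log (1 + ‖u‖) := by rw [Real.log_pow, Nat.cast_ofNat]

lemma tendsto_log_inv_mul_tailMass (M : Model d P)
    (hlog : Integrable fun x : EuclideanSpace ℝ (Fin d) => M.g ‖x‖ * Real.log (1 + ‖x‖)) :
    Tendsto (fun r => Real.log r⁻¹ * M.tailMass r) (𝓝[>] 0) (𝓝 0) := by
  have hlim := (tendsto_setIntegral_compl_of_aecover
    (aecover_inv_smul volume measurableSet_cube cube_mem_nhds_zero) hlog).const_mul 2
  rw [mul_zero] at hlim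
  refine squeeze_zero' ?_ ?_ hlim
  · filter_upwards [tendsto_inv_nhdsGT_zero.eventually_ge_atTop 1] with r hr
    exact mul_nonneg (Real.log_nonneg hr) (M.tailMass_nonneg r)
  · filter_upwards [self_mem_nhdsWithin] with r hr
    rw [tailMass, ← integral_const_mul, ← integral_const_mul]
    refine setIntegral_mono_on (M.g_integrable.const_mul _).integrableOn
      (hlog.const_mul _).integrableOn (measurableSet_cube.const_smul₀ r⁻¹).compl fun u hu => ?_
    have hg := (M.g_mem ‖u‖ (norm_nonneg u)).1
    have hle := log_inv_le_of_notMem_inv_smul_cube (mem_Ioi.1 hr) hu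
    calc Real.log r⁻¹ * M.g ‖u‖ ≤ 2 * Real.log (1 + ‖u‖) * M.g ‖u‖ := by gcongr
      _ = 2 * (M.g ‖u‖ * Real.log (1 + ‖u‖)) := by ring

lemma tendsto_critRadius (hd : d ≠ 0) (M : Model d P) (b : ℝ) :
    Tendsto (M.critRadius b) atTop (𝓝[>] 0) := by
  obtain ⟨hzero, hpos⟩ := tendsto_nhdsWithin_iff.1 (tendsto_log_add_div_mul M.α_pos b)
  refine tendsto_nhdsWithin_iff.2 ⟨?_, hpos.mono fun x hx => Real.rpow_pos_of_pos hx _⟩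
  have hlim := hzero.rpow_const (p := (1 : ℝ) / d) (Or.inr (by positivity))
  rwa [Real.zero_rpow (by positivity)] at hlim

lemma isBigO_log_inv_critRadius (hd : d ≠ 0) (M : Model d P) (b : ℝ) :
    (fun x => Real.log x + b) =O[atTop] fun x => Real.log (M.critRadius b x)⁻¹ := by
  refine (isEquivalent_log_add_div_mul M.α_pos b).symm.isBigO.trans (IsBigO.of_bound d ?_)
  have hpos := (tendsto_nhdsWithin_iff.1 (tendsto_log_add_div_mul M.α_pos b)).2
  filter_upwards [hpos] with x hx
  have hlog : -Real.log ((Real.log x + b) / (M.α * x)) = d * Real.log (M.critRadius b x)⁻¹ := by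
    rw [critRadius, Real.log_inv, Real.log_rpow hx]
    field_simp
  rw [hlog, norm_mul, Real.norm_natCast]

lemma tendsto_log_add_mul_tailMass (hd : d ≠ 0) (M : Model d P)
    (hlog : Integrable fun x : EuclideanSpace ℝ (Fin d) => M.g ‖x‖ * Real.log (1 + ‖x‖))
    (b : ℝ) :
    Tendsto (fun x => (Real.log x + b) * M.tailMass (M.critRadius b x)) atTop (𝓝 0) :=
  ((M.isBigO_log_inv_critRadius hd b).mul (isBigO_refl _ _)).trans_tendsto
    ((M.tendsto_log_inv_mul_tailMass hlog).comp (M.tendsto_critRadius hd b))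

lemma integral_isolatedCount_critRadius [IsProbabilityMeasure P] (hd : d ≠ 0) (M : Model d P)
    {b : ℝ} {n : ℕ} (hn : 0 < n) (hL : 0 < Real.log n + b) :
    ∫ ω, (isolatedCount M n (M.critRadius b n) ω : ℝ) ∂P =
      Real.exp (-b + (Real.log n + b) * M.tailMass (M.critRadius b n) / M.α) := by
  have hα := M.α_pos
  have hn' : (0 : ℝ) < n := Nat.cast_pos.2 hn
  have ht : 0 < (Real.log n + b) / (M.α * n) := by positivity
  have hr : 0 < M.critRadius b n := Real.rpow_pos_of_pos ht _
  have hpow : M.critRadius b n ^ d = (Real.log n + b) / (M.α * n) := by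
    rw [critRadius, one_div, Real.rpow_inv_natCast_pow ht.le hd]
  calc ∫ ω, (isolatedCount M n (M.critRadius b n) ω : ℝ) ∂P
      = Real.exp (Real.log n) * Real.exp (-(n * M.edgeProb (M.critRadius b n))) := by
        rw [M.integral_isolatedCount n hr, Real.exp_log hn']
    _ = Real.exp (-b + (Real.log n + b) * M.tailMass (M.critRadius b n) / M.α) := by
        rw [← Real.exp_add, M.edgeProb_eq hr, hpow]
        congr 1
        field_simp
        ring

end CriticalRadius

end Model

theorem expected_isolated_count_tendsto_general (hd : d ≠ 0) [IsProbabilityMeasure P]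
    (M : Model d P)
    (hlog : Integrable fun x : EuclideanSpace ℝ (Fin d) => M.g ‖x‖ * Real.log (1 + ‖x‖))
    (b : ℝ) :
    Tendsto (fun n : ℕ =>
        ∫ ω, (isolatedCount M n (((Real.log n + b) / (M.α * n)) ^ ((1 : ℝ) / d)) ω : ℝ) ∂P)
      atTop (nhds (Real.exp (-b))) := by
  have hcast : Tendsto (Nat.cast : ℕ → ℝ) atTop atTop := tendsto_natCast_atTop_atTop
  have herror := ((M.tendsto_log_add_mul_tailMass hd hlog b).div_const M.α).const_add (-b)
  rw [zero_div, add_zero] at herror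
  refine ((Real.continuous_exp.tendsto _).comp (herror.comp hcast)).congr' ?_
  have hL := ((tendsto_log_add_atTop b).comp hcast).eventually_gt_atTop 0
  filter_upwards [eventually_gt_atTop 0, hL] with n hn hLn
  exact (M.integral_isolatedCount_critRadius hd hn hLn).symm

/-- Proposition 1: if `g(r) = o(r^{-c})` for some `c > d` and `r_n(b)^d = (log n + b)/(α n)`,
then `E[W_n(r_n(b))] → e^{-b}`. -/
theorem expected_isolated_count_tendsto
    (hd : 2 ≤ d) [IsProbabilityMeasure P] (M : Model d P)
    {c : ℝ} (hc : (d : ℝ) < c)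
    (hg : M.g =o[atTop] fun r : ℝ => r ^ (-c))
    (b : ℝ) :
    Tendsto (fun n : ℕ =>
        ∫ ω, (isolatedCount M n (((Real.log n + b) / (M.α * n)) ^ ((1 : ℝ) / d)) ω : ℝ) ∂P)
      atTop (nhds (Real.exp (-b))) := by
  have hfinrank : (Module.finrank ℝ (EuclideanSpace ℝ (Fin d)) : ℝ) < c := by
    rwa [finrank_euclideanSpace_fin]
  exact expected_isolated_count_tendsto_general (by omega) M
    (integrable_mul_log_one_add_norm M.g_integrable.locallyIntegrable hfinrank hg.isBigO) b

end RCM
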